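/- Let q and q′ be odd prime powers with q ≡ 1 (mod 4) and q′ ≡ 1 (mod 4), let k ≡ 2 (mod 4) with 3 < k, k dividing both q−1 and q′−1, k < q−1, k < q′−1, and suppose e = (q−1)/k and e′ = (q′−1)/k are both even. Let β ∈ F_q and β′ ∈ F_{q′} be primitive k-th roots of unity. If χ_q(1−β^{2j}) = χ_{q′}(1−β′^{2j}) for every j with 1 ≤ 2j ≤ k/2 − 1 and χ_q(2) = χ_{q′}(2), then (q,k) gives a 3-design if and only if (q′,k) gives a 3-design. (Here χ_q and χ_{q′} denote the quadratic residue characters of F_q and F_{q′}.) -/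

import Mathlib

/-!
Setting: `F` is a finite field of order `q`. The projective line `PG(1,q)` is
modelled as `Projectivization F (Fin 2 → F)`. Since scalar matrices act trivially
on the projective line, the images of a set under all elements of `SL(2,F)` form
exactly its `PSL(2,F)`-orbit; `mapSL g` is the map of the projective line induced
by `g : SL(2,F)`. For `k ∣ q - 1`, the unique subgroup of order `k` of `Fˣ` is the
set of `k`-th roots of unity `{x : F | x ^ k = 1}`, embedded into the projective
line via `x ↦ [x : 1]`. `(q, k)` gives a 3-design iff there is `lam > 0` such that
every 3-subset of the projective line lies in exactly `lam` blocks of the orbit.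
-/

noncomputable section

open Matrix

/-- The point at infinity `[1 : 0]` of the projective line over `F`. -/
def inftyPt (F : Type) [Field F] : Projectivization F (Fin 2 → F) :=
  Projectivization.mk F ![1, 0] (by
    intro h
    simpa using congrFun h 0)

/-- The embedding of `F` into the projective line, `x ↦ [x : 1]`. -/
def embedPt (F : Type) [Field F] (x : F) : Projectivization F (Fin 2 → F) :=
  Projectivization.mk F ![x, 1] (by
    intro h
    simpa using congrFun h 1)

/-- The action of `g : SL(2,F)` on the projective line (as linear fractional
transformation). -/
def mapSL {F : Type} [Field F] (g : Matrix.SpecialLinearGroup (Fin 2) F) :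
    Projectivization F (Fin 2 → F) → Projectivization F (Fin 2 → F) :=
  Projectivization.map (Matrix.SpecialLinearGroup.toLin' g : (Fin 2 → F) →ₗ[F] (Fin 2 → F))
    (Matrix.SpecialLinearGroup.toLin' g).injective

/-- The starter block: the unique subgroup of order `k` of `Fˣ` (the `k`-th roots
of unity, for `k ∣ q - 1`), regarded as a subset of the projective line. -/
def starterB (F : Type) [Field F] (k : ℕ) : Set (Projectivization F (Fin 2 → F)) :=
  embedPt F '' {x : F | x ^ k = 1}

/-- The `PSL(2,F)`-orbit `GB` of the starter block. -/
def designBlocks (F : Type) [Field F] (k : ℕ) :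
    Set (Set (Projectivization F (Fin 2 → F))) :=
  {S | ∃ g : Matrix.SpecialLinearGroup (Fin 2) F, S = mapSL g '' starterB F k}

/-- `GB` is the block set of a `3-(q+1, k, lam)` design: `lam` is positive and every
3-subset of the projective line is contained in exactly `lam` blocks. -/
def isThreeDesign (F : Type) [Field F] (k lam : ℕ) : Prop :=
  0 < lam ∧
    ∀ T : Finset (Projectivization F (Fin 2 → F)), T.card = 3 →
      {S ∈ designBlocks F k | (T : Set (Projectivization F (Fin 2 → F))) ⊆ S}.ncard = lam

/-- `(q, k)` gives a 3-design. -/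
def gives3Design (F : Type) [Field F] (k : ℕ) : Prop :=
  ∃ lam : ℕ, isThreeDesign F k lam

abbrev PL (F : Type) [Field F] := Projectivization F (Fin 2 → F)

def dd {F : Type} [Field F] (u v : Fin 2 → F) : F := u 0 * v 1 - u 1 * v 0

def tau {F : Type} [Field F] [Fintype F] [DecidableEq F] (x y z : PL F) : ℤ :=
  quadraticChar F (dd x.rep y.rep * dd y.rep z.rep * dd z.rep x.rep)

section
variable {F : Type} [Field F]

lemma dd_mul (M : Matrix (Fin 2) (Fin 2) F) (u v : Fin 2 → F) :
    dd (M *ᵥ u) (M *ᵥ v) = M.det * dd u v := by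
  simp [dd, Matrix.mulVec, dotProduct, Fin.sum_univ_two, Matrix.det_fin_two]
  ring

lemma dd_eq_zero_iff (u v : Fin 2 → F) (hu : u ≠ 0) (hv : v ≠ 0) :
    dd u v = 0 ↔ Projectivization.mk F u hu = Projectivization.mk F v hv := by
  rw [Projectivization.mk_eq_mk_iff']
  constructor
  · intro h
    unfold dd at h
    by_cases h0 : v 0 = 0
    · have h1 : v 1 ≠ 0 := by
        intro h1; apply hv; ext i; fin_cases i <;> simp [h0, h1]
      refine ⟨u 1 / v 1, ?_⟩
      ext i; fin_cases i
      · simp [h0] at h ⊢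
        rcases h with h | h
        · exact h.symm
        · exact absurd h h1
      · simp; field_simp
    · refine ⟨u 0 / v 0, ?_⟩
      ext i; fin_cases i
      · simp; field_simp
      · simp; field_simp; linear_combination h
  · rintro ⟨a, rfl⟩
    simp [dd]; ring

lemma mapSL_mk (g : Matrix.SpecialLinearGroup (Fin 2) F) (v : Fin 2 → F) (hv : v ≠ 0)
    (h : (g : Matrix (Fin 2) (Fin 2) F) *ᵥ v ≠ 0) :
    mapSL g (Projectivization.mk F v hv) = Projectivization.mk F ((g : Matrix (Fin 2) (Fin 2) F) *ᵥ v) h := by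
  unfold mapSL
  rw [Projectivization.map_mk]
  rfl

lemma mapSL_ne (g : Matrix.SpecialLinearGroup (Fin 2) F) (v : Fin 2 → F) (hv : v ≠ 0) :
    (g : Matrix (Fin 2) (Fin 2) F) *ᵥ v ≠ 0 := by
  intro h
  apply hv
  have := (Matrix.SpecialLinearGroup.toLin' g).injective
  apply this
  rw [map_zero]
  exact h

lemma mapSL_mul (g h : Matrix.SpecialLinearGroup (Fin 2) F) (x : PL F) :
    mapSL (g * h) x = mapSL g (mapSL h x) := by
  induction x using Projectivization.ind with
  | h v hv =>
    rw [mapSL_mk h v hv (mapSL_ne _ _ hv), mapSL_mk g _ _ (mapSL_ne _ _ (mapSL_ne _ _ hv)),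
      mapSL_mk _ v hv (mapSL_ne _ _ hv)]
    simp only [Matrix.mulVec_mulVec, Matrix.SpecialLinearGroup.coe_mul]

lemma mapSL_one (x : PL F) : mapSL (1 : Matrix.SpecialLinearGroup (Fin 2) F) x = x := by
  induction x using Projectivization.ind with
  | h v hv =>
    rw [mapSL_mk _ v hv (mapSL_ne _ _ hv)]
    simp

def mapE (g : Matrix.SpecialLinearGroup (Fin 2) F) : PL F ≃ PL F where
  toFun := mapSL g
  invFun := mapSL g⁻¹
  left_inv x := by rw [← mapSL_mul]; simp [mapSL_one]
  right_inv x := by rw [← mapSL_mul]; simp [mapSL_one]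

def m0 (u v w : Fin 2 → F) : Matrix (Fin 2) (Fin 2) F :=
  !![dd v w * u 0, dd w u * v 0; dd v w * u 1, dd w u * v 1]

lemma trans_aux (u v w u' v' w' : Fin 2 → F) (r : F)
    (h1 : dd v w ≠ 0) (h2 : dd w u ≠ 0) (h3 : dd u v ≠ 0)
    (h1' : dd v' w' ≠ 0) (h2' : dd w' u' ≠ 0) (h3' : dd u' v' ≠ 0)
    (hr : (dd u v * dd v w * dd w u) * (dd u' v' * dd v' w' * dd w' u') = r * r) :
    ∃ g : Matrix.SpecialLinearGroup (Fin 2) F,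
      dd ((g : Matrix (Fin 2) (Fin 2) F) *ᵥ u) u' = 0 ∧
      dd ((g : Matrix (Fin 2) (Fin 2) F) *ᵥ v) v' = 0 ∧
      dd ((g : Matrix (Fin 2) (Fin 2) F) *ᵥ w) w' = 0 := by
  have hr0 : r ≠ 0 := by
    rintro rfl
    simp_all
  have e : ∀ (u v w : Fin 2 → F), (m0 u v w).det = dd u v * dd v w * dd w u := by
    intro u v w
    simp [m0, Matrix.det_fin_two, dd]; ring
  refine ⟨⟨r⁻¹ • (m0 u' v' w' * (m0 u v w).adjugate), ?_⟩, ?_, ?_, ?_⟩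
  · rw [Matrix.det_smul, Matrix.det_mul, Matrix.det_adjugate, e, e]
    simp
    field_simp
    linear_combination hr
  all_goals
    simp [m0, Matrix.adjugate_fin_two, Matrix.mulVec, dotProduct, Fin.sum_univ_two, dd]
    ring

variable [Fintype F] [DecidableEq F]

lemma chi_sq_mul {c : F} (hc : c ≠ 0) (a : F) :
    quadraticChar F (c ^ 2 * a) = quadraticChar F a := by
  rw [map_mul, quadraticChar_sq_one' hc, one_mul]

lemma tau_mk (u v w : Fin 2 → F) (hu : u ≠ 0) (hv : v ≠ 0) (hw : w ≠ 0) :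
    tau (Projectivization.mk F u hu) (Projectivization.mk F v hv) (Projectivization.mk F w hw)
      = quadraticChar F (dd u v * dd v w * dd w u) := by
  obtain ⟨a, ha⟩ := Projectivization.exists_smul_eq_mk_rep F u hu
  obtain ⟨b, hb⟩ := Projectivization.exists_smul_eq_mk_rep F v hv
  obtain ⟨c, hc⟩ := Projectivization.exists_smul_eq_mk_rep F w hw
  unfold tau
  rw [← ha, ← hb, ← hc]
  rw [← chi_sq_mul (c := (a * b * c : F)) (by simp) (dd u v * dd v w * dd w u)]
  congr 1
  simp [dd, Units.smul_def]
  ring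

lemma tau_map (g : Matrix.SpecialLinearGroup (Fin 2) F) (x y z : PL F) :
    tau (mapSL g x) (mapSL g y) (mapSL g z) = tau x y z := by
  induction x using Projectivization.ind with
  | h u hu =>
  induction y using Projectivization.ind with
  | h v hv =>
  induction z using Projectivization.ind with
  | h w hw =>
  rw [mapSL_mk g u hu (mapSL_ne _ _ hu), mapSL_mk g v hv (mapSL_ne _ _ hv),
    mapSL_mk g w hw (mapSL_ne _ _ hw), tau_mk, tau_mk]
  simp only [dd_mul, Matrix.SpecialLinearGroup.det_coe, one_mul]

lemma tau_eq_zero_iff (x y z : PL F) : tau x y z = 0 ↔ (x = y ∨ y = z ∨ z = x) := by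
  induction x using Projectivization.ind with
  | h u hu =>
  induction y using Projectivization.ind with
  | h v hv =>
  induction z using Projectivization.ind with
  | h w hw =>
  rw [tau_mk, quadraticChar_eq_zero_iff, mul_eq_zero, mul_eq_zero, dd_eq_zero_iff u v hu hv,
    dd_eq_zero_iff v w hv hw, dd_eq_zero_iff w u hw hu, or_assoc]

lemma trans_pt (x y z x' y' z' : PL F) (h0 : tau x y z ≠ 0)
    (h : tau x y z = tau x' y' z') :
    ∃ g : Matrix.SpecialLinearGroup (Fin 2) F, mapSL g x = x' ∧ mapSL g y = y' ∧ mapSL g z = z' := by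
  induction x using Projectivization.ind with
  | h u hu =>
  induction y using Projectivization.ind with
  | h v hv =>
  induction z using Projectivization.ind with
  | h w hw =>
  induction x' using Projectivization.ind with
  | h u' hu' =>
  induction y' using Projectivization.ind with
  | h v' hv' =>
  induction z' using Projectivization.ind with
  | h w' hw' =>
  have h0' := h0
  rw [h] at h0'
  rw [tau_mk] at h0 h0'
  rw [tau_mk, tau_mk] at h
  have a := h0
  have a' := h0'
  rw [Ne, quadraticChar_eq_zero_iff] at a a'
  have : quadraticChar F ((dd u v * dd v w * dd w u) * (dd u' v' * dd v' w' * dd w' u')) = 1 := by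
    rw [map_mul, ← h, ← pow_two, quadraticChar_sq_one a]
  rw [quadraticChar_one_iff_isSquare (mul_ne_zero a a')] at this
  obtain ⟨r, hr⟩ := this
  simp only [mul_eq_zero, not_or] at a a'
  obtain ⟨g, g1, g2, g3⟩ := trans_aux u v w u' v' w' r a.1.2 a.2 a.1.1 a'.1.2 a'.2 a'.1.1 hr
  refine ⟨g, ?_, ?_, ?_⟩
  · rw [mapSL_mk g u hu (mapSL_ne _ _ hu)]
    exact (dd_eq_zero_iff _ _ _ _).1 g1
  · rw [mapSL_mk g v hv (mapSL_ne _ _ hv)]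
    exact (dd_eq_zero_iff _ _ _ _).1 g2
  · rw [mapSL_mk g w hw (mapSL_ne _ _ hw)]
    exact (dd_eq_zero_iff _ _ _ _).1 g3

instance : Finite (PL F) := by
  unfold PL Projectivization
  infer_instance

noncomputable instance : Fintype (PL F) := Fintype.ofFinite _

lemma sum3_equiv {α : Type} [Fintype α] (e : α ≃ α) (f : α → α → α → ℤ) :
    ∑ x, ∑ y, ∑ z, f (e x) (e y) (e z) = ∑ x, ∑ y, ∑ z, f x y z := by
  rw [← e.sum_comp (fun x => ∑ y, ∑ z, f x y z)]
  refine Finset.sum_congr rfl fun x _ => ?_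
  rw [← e.sum_comp (fun y => ∑ z, f (e x) y z)]
  refine Finset.sum_congr rfl fun y _ => ?_
  rw [← e.sum_comp (fun z => f (e x) (e y) z)]

lemma sum_tau (hF : ringChar F ≠ 2) : ∑ x : PL F, ∑ y : PL F, ∑ z : PL F, tau x y z = 0 := by
  obtain ⟨n, hn⟩ := quadraticChar_exists_neg_one hF
  have hn0 : n ≠ 0 := by rintro rfl; simp at hn
  let M : Matrix (Fin 2) (Fin 2) F := !![n, 0; 0, 1]
  have hM : M.det = n := by simp [M, Matrix.det_fin_two]
  have hinj : Function.Injective (Matrix.toLin' M) := by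
    have : Function.Injective M.mulVec := by
      rw [Matrix.mulVec_injective_iff_isUnit, Matrix.isUnit_iff_isUnit_det, hM]
      exact hn0.isUnit
    exact this
  let φ : PL F → PL F := Projectivization.map (Matrix.toLin' M) hinj
  have hφ : Function.Bijective φ :=
    Finite.injective_iff_bijective.1 (Projectivization.map_injective _ hinj)
  have ht : ∀ x y z, tau (φ x) (φ y) (φ z) = - tau x y z := by
    intro x y z
    induction x using Projectivization.ind with
    | h u hu =>
    induction y using Projectivization.ind with
    | h v hv =>
    induction z using Projectivization.ind with
    | h w hw =>
    simp only [φ, Projectivization.map_mk, tau_mk, Matrix.toLin'_apply, dd_mul, hM]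
    have : n * dd u v * (n * dd v w) * (n * dd w u) = n ^ 2 * (n * (dd u v * dd v w * dd w u)) := by ring
    rw [this, chi_sq_mul hn0, map_mul, hn]; ring
  let e := Equiv.ofBijective φ hφ
  have key : ∑ x : PL F, ∑ y : PL F, ∑ z : PL F, tau (φ x) (φ y) (φ z) =
      ∑ x : PL F, ∑ y : PL F, ∑ z : PL F, tau x y z :=
    sum3_equiv e tau
  simp only [ht, Finset.sum_neg_distrib] at key
  omega

lemma blocks_map (k : ℕ) (g : Matrix.SpecialLinearGroup (Fin 2) F) {S : Set (PL F)}
    (hS : S ∈ designBlocks F k) : mapSL g '' S ∈ designBlocks F k := by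
  obtain ⟨h, rfl⟩ := hS
  refine ⟨g * h, ?_⟩
  rw [Set.image_image]
  simp only [mapSL_mul]

def NN (k : ℕ) (x y z : PL F) : ℕ :=
  {S ∈ designBlocks F k | x ∈ S ∧ y ∈ S ∧ z ∈ S}.ncard

lemma NN_le (k : ℕ) (g : Matrix.SpecialLinearGroup (Fin 2) F) (x y z : PL F) :
    NN k x y z ≤ NN k (mapSL g x) (mapSL g y) (mapSL g z) := by
  unfold NN
  apply Set.ncard_le_ncard_of_injOn (fun S => mapSL g '' S)
  · rintro S ⟨hS, h1, h2, h3⟩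
    exact ⟨blocks_map k g hS, Set.mem_image_of_mem _ h1, Set.mem_image_of_mem _ h2,
      Set.mem_image_of_mem _ h3⟩
  · exact ((mapE g).injective.image_injective).injOn

lemma NN_map (k : ℕ) (g : Matrix.SpecialLinearGroup (Fin 2) F) (x y z : PL F) :
    NN k (mapSL g x) (mapSL g y) (mapSL g z) = NN k x y z := by
  apply le_antisymm _ (NN_le k g x y z)
  have := NN_le k g⁻¹ (mapSL g x) (mapSL g y) (mapSL g z)
  simpa only [← mapSL_mul, inv_mul_cancel, mapSL_one] using this

lemma NN_eq (k : ℕ) (x y z x' y' z' : PL F) (h0 : tau x y z ≠ 0)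
    (h : tau x y z = tau x' y' z') : NN k x y z = NN k x' y' z' := by
  obtain ⟨g, rfl, rfl, rfl⟩ := trans_pt x y z x' y' z' h0 h
  rw [NN_map]

open Classical in
def SS (S : Set (PL F)) : ℤ :=
  ∑ x : PL F, ∑ y : PL F, ∑ z : PL F, if x ∈ S ∧ y ∈ S ∧ z ∈ S then tau x y z else 0

lemma SS_map (g : Matrix.SpecialLinearGroup (Fin 2) F) (S : Set (PL F)) :
    SS (mapSL g '' S) = SS S := by
  classical
  unfold SS
  rw [← sum3_equiv (mapE g)]
  have hm : ∀ x, mapE g x ∈ mapSL g '' S ↔ x ∈ S := fun x =>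
    (mapE g).injective.mem_set_image
  have ht : ∀ x y z, tau (mapE g x) (mapE g y) (mapE g z) = tau x y z := tau_map g
  simp only [hm, ht]

lemma double_count (k : ℕ) :
    ∑ x : PL F, ∑ y : PL F, ∑ z : PL F, tau x y z * (NN k x y z : ℤ) =
      ((designBlocks F k).ncard : ℤ) * SS (starterB F k) := by
  classical
  have hN : ∀ x y z : PL F, (NN k x y z : ℤ) =
      ∑ S ∈ (designBlocks F k).toFinset, if x ∈ S ∧ y ∈ S ∧ z ∈ S then (1:ℤ) else 0 := by
    intro x y z
    unfold NN
    rw [Finset.sum_boole, Set.ncard_eq_toFinset_card']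
    congr 2
    ext S; simp; tauto
  have h1 : ∀ S ∈ (designBlocks F k).toFinset, SS S = SS (starterB F k) := by
    intro S hS
    rw [Set.mem_toFinset] at hS
    obtain ⟨g, rfl⟩ := hS
    exact SS_map g _
  have h2 := Finset.sum_congr rfl h1
  rw [Finset.sum_const, nsmul_eq_mul, ← Set.ncard_eq_toFinset_card'] at h2
  rw [← h2]
  unfold SS
  symm
  rw [Finset.sum_comm]
  refine Finset.sum_congr rfl fun x _ => ?_
  rw [Finset.sum_comm]
  refine Finset.sum_congr rfl fun y _ => ?_
  rw [Finset.sum_comm]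
  refine Finset.sum_congr rfl fun z _ => ?_
  rw [hN, Finset.mul_sum]
  refine Finset.sum_congr rfl fun S _ => ?_
  split_ifs <;> simp

lemma tau_cases (x y z : PL F) : tau x y z = 0 ∨ tau x y z = 1 ∨ tau x y z = -1 :=
  quadraticChar_isQuadratic F _

lemma NN_const (hF : ringChar F ≠ 2) (k : ℕ) (hS : SS (starterB F k) = 0)
    (x y z x' y' z' : PL F) (h : tau x y z ≠ 0) (h' : tau x' y' z' ≠ 0) :
    NN k x y z = NN k x' y' z' := by
  by_cases heq : tau x y z = tau x' y' z'
  · exact NN_eq k _ _ _ _ _ _ h heq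
  obtain ⟨l, hl⟩ : ∃ l : ℤ, l = NN k x y z := ⟨_, rfl⟩
  obtain ⟨l', hl'⟩ : ∃ l : ℤ, l = NN k x' y' z' := ⟨_, rfl⟩
  set ε := tau x y z with hε
  have hεc : ε = 1 ∨ ε = -1 := by
    rcases tau_cases x y z with h1 | h1 | h1 <;> omega
  have hε' : tau x' y' z' = -ε := by
    rcases tau_cases x' y' z' with h1 | h1 | h1 <;> omega
  have key : ∀ a b c : PL F, 2 * (tau a b c * (NN k a b c : ℤ)) =
      (l + l') * tau a b c + (l - l') * ε * (tau a b c) ^ 2 := by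
    intro a b c
    by_cases h0 : tau a b c = 0
    · simp [h0]
    by_cases h1 : tau a b c = ε
    · have := NN_eq k a b c x y z h0 h1
      rw [this, ← hl, h1]
      rcases hεc with e | e <;> rw [e] <;> ring
    · have h2 : tau a b c = -ε := by
        rcases tau_cases a b c with h1 | h1 | h1 <;> omega
      have := NN_eq k a b c x' y' z' h0 (by omega)
      rw [this, ← hl', h2]
      rcases hεc with e | e <;> rw [e] <;> ring
  have dc := double_count (F := F) k
  rw [hS, mul_zero] at dc
  have d2 : ∑ a : PL F, ∑ b : PL F, ∑ c : PL F, 2 * (tau a b c * (NN k a b c : ℤ)) = 0 := by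
    simp only [← Finset.mul_sum, dc, mul_zero]
  simp only [key, Finset.sum_add_distrib, ← Finset.mul_sum, sum_tau hF] at d2
  have hpos : 0 < ∑ a : PL F, ∑ b : PL F, ∑ c : PL F, (tau a b c) ^ 2 := by
    apply Finset.sum_pos' (fun _ _ => Finset.sum_nonneg fun _ _ => Finset.sum_nonneg fun _ _ => sq_nonneg _)
    refine ⟨x, Finset.mem_univ _, ?_⟩
    apply Finset.sum_pos' (fun _ _ => Finset.sum_nonneg fun _ _ => sq_nonneg _)
    refine ⟨y, Finset.mem_univ _, ?_⟩
    apply Finset.sum_pos' (fun _ _ => sq_nonneg _)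
    exact ⟨z, Finset.mem_univ _, by positivity⟩
  have : l - l' = 0 := by
    rw [mul_zero, zero_add, mul_eq_zero, mul_eq_zero] at d2
    rcases d2 with (d | d) | d
    · exact d
    · exact absurd d h
    · omega
  omega

lemma design_iff (hF : ringChar F ≠ 2) (k : ℕ) (x₀ y₀ z₀ : PL F) (h₀ : tau x₀ y₀ z₀ ≠ 0)
    (hx : x₀ ∈ starterB F k) (hy : y₀ ∈ starterB F k) (hz : z₀ ∈ starterB F k) :
    gives3Design F k ↔ SS (starterB F k) = 0 := by
  classical
  have hset : ∀ x y z : PL F,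
      {S ∈ designBlocks F k | ((({x, y, z} : Finset (PL F)) : Set (PL F)) ⊆ S)}.ncard
        = NN k x y z := by
    intro x y z
    unfold NN
    congr 1
    ext S
    simp [Set.insert_subset_iff]
  have hbB : starterB F k ∈ designBlocks F k := by
    refine ⟨1, ?_⟩
    ext p
    simp [mapSL_one]
  constructor
  · rintro ⟨lam, hl, h⟩
    have hd := double_count (F := F) k
    have : ∀ x y z : PL F, tau x y z * (NN k x y z : ℤ) = lam * tau x y z := by
      intro x y z
      by_cases h0 : tau x y z = 0
      · simp [h0]
      · have h1 := h0
        rw [tau_eq_zero_iff] at h1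
        push Not at h1
        rw [← hset, h {x, y, z} (Finset.card_eq_three.2 ⟨x, y, z, h1.1, h1.2.2.symm, h1.2.1, rfl⟩)]
        ring
    simp only [this, ← Finset.mul_sum, sum_tau hF] at hd
    rw [mul_zero, eq_comm, mul_eq_zero] at hd
    rcases hd with hd | hd
    · have : (designBlocks F k).ncard ≠ 0 := Set.ncard_ne_zero_of_mem hbB
      omega
    · exact hd
  · intro hS
    refine ⟨NN k x₀ y₀ z₀, ?_, ?_⟩
    · exact Nat.pos_of_ne_zero (Set.ncard_ne_zero_of_mem (a := starterB F k) ⟨hbB, hx, hy, hz⟩)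
    · intro T hT
      obtain ⟨x, y, z, h1, h2, h3, rfl⟩ := Finset.card_eq_three.1 hT
      rw [hset]
      apply NN_const hF k hS _ _ _ _ _ _ _ h₀
      rw [Ne, tau_eq_zero_iff]
      push Not
      exact ⟨h1, h3, h2.symm⟩

lemma tau_embed (a b c : F) : tau (embedPt F a) (embedPt F b) (embedPt F c) =
    quadraticChar F ((a - b) * (b - c) * (c - a)) := by
  unfold embedPt
  rw [tau_mk]
  simp [dd]

lemma embed_inj : Function.Injective (embedPt F) := by
  intro a b h
  unfold embedPt at h
  rw [← dd_eq_zero_iff] at h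
  simp [dd] at h
  linear_combination h

lemma SS_eq (k : ℕ) (hk : 0 < k) (β : F) (hβ : orderOf β = k) :
    SS (starterB F k) = ∑ a ∈ Finset.range k, ∑ b ∈ Finset.range k, ∑ c ∈ Finset.range k,
      quadraticChar F ((β ^ a - β ^ b) * (β ^ b - β ^ c) * (β ^ c - β ^ a)) := by
  classical
  have hinj : Set.InjOn (fun i => embedPt F (β ^ i)) (Finset.range k : Set ℕ) := by
    intro i hi j hj hij
    have := embed_inj hij
    apply pow_injOn_Iio_orderOf (x := β) _ _ this
    · simpa [hβ] using hi
    · simpa [hβ] using hj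
  have hprim : IsPrimitiveRoot β k := hβ ▸ IsPrimitiveRoot.orderOf β
  have hB : ∀ x : PL F, x ∈ starterB F k ↔ x ∈ (Finset.range k).image (fun i => embedPt F (β ^ i)) := by
    intro x
    simp only [starterB, Set.mem_image, Set.mem_ofPred_eq, Finset.mem_image, Finset.mem_range]
    constructor
    · rintro ⟨y, hy, rfl⟩
      have : NeZero k := ⟨hk.ne'⟩
      obtain ⟨i, hi, rfl⟩ := hprim.eq_pow_of_pow_eq_one hy
      exact ⟨i, hi, rfl⟩
    · rintro ⟨i, hi, rfl⟩
      exact ⟨β ^ i, by rw [← pow_mul, mul_comm, pow_mul, hprim.pow_eq_one, one_pow], rfl⟩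
  have hs : ∀ f : PL F → ℤ, (∑ x, if x ∈ starterB F k then f x else 0) =
      ∑ a ∈ Finset.range k, f (embedPt F (β ^ a)) := by
    intro f
    simp only [hB]
    rw [Finset.sum_ite_mem, Finset.univ_inter, Finset.sum_image hinj]
  unfold SS
  have : ∀ x y z : PL F, (if x ∈ starterB F k ∧ y ∈ starterB F k ∧ z ∈ starterB F k then tau x y z else 0)
     = if x ∈ starterB F k then if y ∈ starterB F k then if z ∈ starterB F k then tau x y z else 0 else 0 else 0 := by
    intro x y z
    split_ifs <;> first | rfl | tauto
  simp only [this]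
  have pull : ∀ (p : Prop) [Decidable p] (f : PL F → ℤ), (∑ x, if p then f x else 0) =
    if p then ∑ x, f x else 0 := by
    intro p _ f
    split_ifs <;> simp
  simp only [pull, hs, tau_embed]
end

section
variable {F : Type} [Field F] [Fintype F] [DecidableEq F]

lemma chi_pow (k : ℕ) (hk : 0 < k) (hq4 : Fintype.card F % 4 = 1)
    (hkdvd : k ∣ Fintype.card F - 1) (he : Even ((Fintype.card F - 1) / k))
    (β : F) (hβ : orderOf β = k) (hF : ringChar F ≠ 2) (a : ℕ) :
    quadraticChar F (β ^ a) = 1 := by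
  have hb : β ≠ 0 := by
    rintro rfl
    rw [orderOf_zero] at hβ
    omega
  have : quadraticChar F β = 1 := by
    rw [quadraticChar_one_iff_isSquare hb, FiniteField.isSquare_iff hF hb]
    obtain ⟨c, hc⟩ := hkdvd
    rw [hc, Nat.mul_div_cancel_left _ hk] at he
    obtain ⟨m, hm⟩ := he
    have : Fintype.card F / 2 = k * m := by
      have : Fintype.card F - 1 = 2 * (k * m) := by rw [hc, hm]; ring
      omega
    rw [this, pow_mul, ← hβ, pow_orderOf_eq_one, one_pow]
  rw [map_pow, this, one_pow]

lemma chi_neg (hq4 : Fintype.card F % 4 = 1) (a : F) :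
    quadraticChar F (-a) = quadraticChar F a := by
  have : quadraticChar F (-1) = 1 := by
    rw [quadraticChar_one_iff_isSquare (by simp), FiniteField.isSquare_neg_one_iff]
    omega
  rw [neg_eq_neg_one_mul, map_mul, this, one_mul]

lemma chi_refl (k : ℕ) (hk : 0 < k) (hq4 : Fintype.card F % 4 = 1)
    (hkdvd : k ∣ Fintype.card F - 1) (he : Even ((Fintype.card F - 1) / k))
    (β : F) (hβ : orderOf β = k) (hF : ringChar F ≠ 2) (i : ℕ) (hi : i ≤ k) :
    quadraticChar F (1 - β ^ i) = quadraticChar F (1 - β ^ (k - i)) := by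
  have h : 1 - β ^ (k - i) = β ^ (k - i) * (-(1 - β ^ i)) := by
    have : β ^ (k - i) * β ^ i = 1 := by
      rw [← pow_add, Nat.sub_add_cancel hi, ← hβ, pow_orderOf_eq_one]
    linear_combination -this
  rw [h, map_mul, chi_pow k hk hq4 hkdvd he β hβ hF, chi_neg hq4, one_mul]

lemma pow_half (k : ℕ) (hk : 0 < k) (hk4 : k % 4 = 2) (β : F) (hβ : orderOf β = k) :
    β ^ (k / 2) = -1 := by
  have h2 : (β ^ (k / 2)) ^ 2 = 1 := by
    rw [← pow_mul, show k / 2 * 2 = k by omega, ← hβ, pow_orderOf_eq_one]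
  rcases (sq_eq_sq_iff_eq_or_eq_neg.1 (h2.trans (one_pow 2).symm)) with h | h
  · have := orderOf_dvd_of_pow_eq_one h
    rw [hβ] at this
    have := Nat.le_of_dvd (by omega) this
    omega
  · exact h

lemma odd_facts (k : ℕ) (hk : 0 < k) (hk4 : k % 4 = 2) (β : F) (hβ : orderOf β = k) (j : ℕ) :
    (k ∣ j + k / 2 → quadraticChar F (1 - β ^ j) = quadraticChar F 2) ∧
    (¬ k ∣ j + k / 2 → quadraticChar F (1 - β ^ (j + k / 2)) ≠ 0) ∧
    quadraticChar F (1 - β ^ (j + k / 2)) * quadraticChar F (1 - β ^ j) =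
      quadraticChar F (1 - β ^ (2 * (j + k / 2))) := by
  have hp := pow_half k hk hk4 β hβ
  refine ⟨?_, ?_, ?_⟩
  · intro h
    rw [← hβ, orderOf_dvd_iff_pow_eq_one, hβ, pow_add, hp] at h
    congr 1
    linear_combination h
  · intro h h0
    apply h
    rw [quadraticChar_eq_zero_iff] at h0
    conv_lhs => rw [← hβ]
    rw [orderOf_dvd_iff_pow_eq_one]
    linear_combination -h0
  · rw [← map_mul]
    congr 1
    rw [mul_comm 2, pow_mul, pow_add, hp]
    ring
end

lemma chi_eq_all {F F' : Type} [Field F] [Fintype F] [DecidableEq F]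
    [Field F'] [Fintype F'] [DecidableEq F']
    (k : ℕ) (hq4 : Fintype.card F % 4 = 1) (hq'4 : Fintype.card F' % 4 = 1)
    (hk4 : k % 4 = 2)
    (hkdvd : k ∣ Fintype.card F - 1) (hk'dvd : k ∣ Fintype.card F' - 1)
    (he : Even ((Fintype.card F - 1) / k)) (he' : Even ((Fintype.card F' - 1) / k))
    (hF : ringChar F ≠ 2) (hF' : ringChar F' ≠ 2)
    (β : F) (β' : F') (hβ : orderOf β = k) (hβ' : orderOf β' = k)
    (hch : ∀ j : ℕ, 1 ≤ 2 * j → 2 * j ≤ k / 2 - 1 →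
      quadraticChar F (1 - β ^ (2 * j)) = quadraticChar F' (1 - β' ^ (2 * j)))
    (hch2 : quadraticChar F 2 = quadraticChar F' 2) (n : ℕ) :
    quadraticChar F (1 - β ^ n) = quadraticChar F' (1 - β' ^ n) := by
  have hk : 0 < k := by omega
  have small : ∀ n : ℕ, n % 2 = 0 → n ≤ k / 2 - 1 →
      quadraticChar F (1 - β ^ n) = quadraticChar F' (1 - β' ^ n) := by
    intro n hn hnk
    rcases Nat.eq_zero_or_pos n with rfl | hp
    · simp
    · obtain ⟨j, rfl⟩ : ∃ j, n = 2 * j := ⟨n / 2, by omega⟩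
      exact hch j hp hnk
  have even : ∀ n : ℕ, n % 2 = 0 →
      quadraticChar F (1 - β ^ n) = quadraticChar F' (1 - β' ^ n) := by
    intro n hn
    rw [← pow_mod_orderOf β, ← pow_mod_orderOf β', hβ, hβ']
    have hlt := Nat.mod_lt n hk
    have hev : (n % k) % 2 = 0 := by
      rw [Nat.mod_mod_of_dvd _ (by omega)]; exact hn
    generalize n % k = i at *
    by_cases hi : i ≤ k / 2 - 1
    · exact small i hev hi
    · rw [chi_refl k hk hq4 hkdvd he β hβ hF i hlt.le,
        chi_refl k hk hq'4 hk'dvd he' β' hβ' hF' i hlt.le]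
      exact small _ (by omega) (by omega)
  by_cases hn : n % 2 = 0
  · exact even n hn
  obtain ⟨a1, a2, a3⟩ := odd_facts k hk hk4 β hβ n
  obtain ⟨b1, b2, b3⟩ := odd_facts k hk hk4 β' hβ' n
  by_cases hd : k ∣ n + k / 2
  · rw [a1 hd, b1 hd, hch2]
  · have e1 := even (n + k / 2) (by omega)
    have e2 := even (2 * (n + k / 2)) (by omega)
    rw [← a3, ← b3, e1] at e2
    exact mul_left_cancel₀ (b2 hd) e2

lemma chi_diff {F F' : Type} [Field F] [Fintype F] [DecidableEq F]
    [Field F'] [Fintype F'] [DecidableEq F']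
    (hq4 : Fintype.card F % 4 = 1) (hq'4 : Fintype.card F' % 4 = 1)
    (β : F) (β' : F')
    (h1 : ∀ a, quadraticChar F (β ^ a) = 1) (h1' : ∀ a, quadraticChar F' (β' ^ a) = 1)
    (h : ∀ n, quadraticChar F (1 - β ^ n) = quadraticChar F' (1 - β' ^ n)) (a b : ℕ) :
    quadraticChar F (β ^ a - β ^ b) = quadraticChar F' (β' ^ a - β' ^ b) := by
  have main : ∀ a d, quadraticChar F (β ^ a - β ^ (a + d)) =
      quadraticChar F' (β' ^ a - β' ^ (a + d)) := by
    intro a d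
    rw [show β ^ a - β ^ (a + d) = β ^ a * (1 - β ^ d) by ring,
      show β' ^ a - β' ^ (a + d) = β' ^ a * (1 - β' ^ d) by ring, map_mul, map_mul, h1, h1', h]
  rcases le_total a b with hab | hab
  · obtain ⟨d, rfl⟩ := Nat.exists_eq_add_of_le hab
    exact main a d
  · obtain ⟨d, rfl⟩ := Nat.exists_eq_add_of_le hab
    rw [← neg_sub, chi_neg hq4, main, ← chi_neg hq'4, neg_sub]

lemma design_iff_sum {F : Type} [Field F] [Fintype F] [DecidableEq F] (k : ℕ) (hk3 : 3 < k)
    (hF : ringChar F ≠ 2) (β : F) (hβ : orderOf β = k) :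
    gives3Design F k ↔ ∑ a ∈ Finset.range k, ∑ b ∈ Finset.range k, ∑ c ∈ Finset.range k,
      quadraticChar F ((β ^ a - β ^ b) * (β ^ b - β ^ c) * (β ^ c - β ^ a)) = 0 := by
  rw [← SS_eq k (by omega) β hβ]
  have hm : ∀ i, embedPt F (β ^ i) ∈ starterB F k := by
    intro i
    refine ⟨β ^ i, ?_, rfl⟩
    change (β ^ i) ^ k = 1
    rw [← pow_mul, mul_comm, pow_mul, ← hβ, pow_orderOf_eq_one, one_pow]
  have hne : ∀ i j, i < k → j < k → i ≠ j → embedPt F (β ^ i) ≠ embedPt F (β ^ j) := by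
    intro i j hi hj hij h
    exact hij (pow_injOn_Iio_orderOf (x := β) (by simpa [hβ] using hi) (by simpa [hβ] using hj)
      (embed_inj h))
  apply design_iff hF k _ _ _ _ (hm 0) (hm 1) (hm 2)
  rw [Ne, tau_eq_zero_iff]
  push Not
  exact ⟨hne 0 1 (by omega) (by omega) (by omega), hne 1 2 (by omega) (by omega) (by omega),
    hne 2 0 (by omega) (by omega) (by omega)⟩

/-- Proposition 2.7(ii): for `k ≡ 2 (mod 4)`, whether `(q,k)` gives a 3-design is
determined by the sequence `(χ(1-β²), χ(1-β⁴), …, χ(1-β^(k/2-1)), χ(2))`, where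
`β` is a primitive `k`-th root of unity. -/
theorem stmt_6 (F F' : Type) [Field F] [Fintype F] [DecidableEq F]
    [Field F'] [Fintype F'] [DecidableEq F']
    (q q' k : ℕ) (hq : Fintype.card F = q) (hq' : Fintype.card F' = q')
    (hqodd : Odd q) (hq'odd : Odd q') (hq4 : q % 4 = 1) (hq'4 : q' % 4 = 1)
    (hk4 : k % 4 = 2) (hk3 : 3 < k)
    (hkdvd : k ∣ q - 1) (hk'dvd : k ∣ q' - 1) (hkq : k < q - 1) (hkq' : k < q' - 1)
    (he : Even ((q - 1) / k)) (he' : Even ((q' - 1) / k))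
    (β : F) (β' : F') (hβ : orderOf β = k) (hβ' : orderOf β' = k)
    (hch : ∀ j : ℕ, 1 ≤ 2 * j → 2 * j ≤ k / 2 - 1 →
      quadraticChar F (1 - β ^ (2 * j)) = quadraticChar F' (1 - β' ^ (2 * j)))
    (hch2 : quadraticChar F 2 = quadraticChar F' 2) :
    gives3Design F k ↔ gives3Design F' k := by
  subst hq hq'
  have hF : ringChar F ≠ 2 := by
    rw [Ne, FiniteField.even_card_iff_char_two]; omega
  have hF' : ringChar F' ≠ 2 := by
    rw [Ne, FiniteField.even_card_iff_char_two]; omega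
  have hk : 0 < k := by omega
  have hd := chi_diff hq4 hq'4 β β' (chi_pow k hk hq4 hkdvd he β hβ hF)
    (chi_pow k hk hq'4 hk'dvd he' β' hβ' hF')
    (chi_eq_all k hq4 hq'4 hk4 hkdvd hk'dvd he he' hF hF' β β' hβ hβ' hch hch2)
  rw [design_iff_sum k hk3 hF β hβ, design_iff_sum k hk3 hF' β' hβ']
  simp only [map_mul, hd]
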